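/- Let n = 2k+1 with k = (2r+1)p + q, p ≥ 1, q ∈ {0, 2r}, and gcd(2r+1, 2k+1) = 1. Then the minimum size of an r-identifying code in the cycle C_{2k+1} is k+2. -/

import Mathlib

/-- `Dr G r D x` = `N_r[x] ∩ D`. -/
def Dr {V : Type*} (G : SimpleGraph V) (r : ℕ) (D : Set V) (x : V) : Set V :=
  {y | y ∈ D ∧ G.dist x y ≤ r}

/-- `D` is an `r`-identifying code of `G`. -/
def IsIdCode {V : Type*} (G : SimpleGraph V) (r : ℕ) (D : Set V) : Prop :=
  (∀ x, (Dr G r D x).Nonempty) ∧ ∀ x y, x ≠ y → Dr G r D x ≠ Dr G r D y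

/-- `D` is an `r`-locating-dominating set of `G`. -/
def IsLD {V : Type*} (G : SimpleGraph V) (r : ℕ) (D : Set V) : Prop :=
  (∀ x ∉ D, (Dr G r D x).Nonempty) ∧
    ∀ x ∉ D, ∀ y ∉ D, x ≠ y → Dr G r D x ≠ Dr G r D y

/-- The cycle graph on `ZMod n`. -/
def cycleG (n : ℕ) : SimpleGraph (ZMod n) :=
  SimpleGraph.fromRel (fun x y => x - y = 1)

/- A vertex set `D` of a long cycle is an `r`-identifying code iff every window of `2r + 1`
consecutive vertices meets `D`, so that all balls meet `D`, and `D` contains one of `z` and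
`z + (2r + 1)` for every `z`, so that consecutive balls are separated.

Put `s = 2r + 1`. In both cases of the theorem `n = 2k + 1 = 2sc ± 1` for some `c`, so `s` generates
`ZMod n` and the steps of length `s` arrange the vertices on an `n`-cycle on which the complement of
`D` is independent. If `|D| ≤ k + 1`, exactly one pair of neighbours on this cycle is contained in
`D`; starting from it, `D` alternates, and in particular misses `z₀ + (2cj + 1)s = z₀ + s ∓ j` for
all `j ≤ 2r`. These are `2r + 1` consecutive vertices, which is impossible.

For the upper bound, cut `0, …, n - 1` into blocks of length `s`, take the blocks of even index with
their second vertex removed and the second vertex of each block of odd index, and finally add the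
vertex `1`. Exactly one of `x` and `x + s` belongs to this pattern, and a step of length `s` beyond
`n - 1` ends in the first block, which lies entirely in the code. -/

open scoped Pointwise

section Cycle

variable {n : ℕ}

theorem cycleG_adj {x y : ZMod n} : (cycleG n).Adj x y ↔ x ≠ y ∧ (x - y = 1 ∨ y - x = 1) :=
  SimpleGraph.fromRel_adj _ _ _

theorem exists_int_of_cycleG_walk {x y : ZMod n} (w : (cycleG n).Walk x y) :
    ∃ i : ℤ, i.natAbs ≤ w.length ∧ y = x + i := by
  induction w with
  | nil => exact ⟨0, by simp⟩
  | cons h w ih =>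
    obtain ⟨i, hi, rfl⟩ := ih
    simp only [SimpleGraph.Walk.length_cons]
    rcases (cycleG_adj.1 h).2 with h | h
    · exact ⟨i - 1, by lia, by push_cast; linear_combination -h⟩
    · exact ⟨i + 1, by lia, by push_cast; linear_combination h⟩

variable [Nontrivial (ZMod n)]

theorem exists_cycleG_walk_add_natCast (x : ZMod n) (m : ℕ) :
    ∃ w : (cycleG n).Walk x (x + m), w.length = m := by
  induction m with
  | zero => exact ⟨SimpleGraph.Walk.nil.copy rfl (by simp), by simp⟩
  | succ m ih =>
    obtain ⟨w, hw⟩ := ih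
    have hadj : (cycleG n).Adj (x + m) (x + (m + 1 : ℕ)) := by simp [cycleG_adj]
    exact ⟨w.concat hadj, by rw [SimpleGraph.Walk.length_concat, hw]⟩

theorem exists_cycleG_walk_add_intCast (x : ZMod n) (i : ℤ) :
    ∃ w : (cycleG n).Walk x (x + i), w.length = i.natAbs := by
  obtain ⟨m, rfl | rfl⟩ := i.eq_nat_or_neg
  · rw [Int.cast_natCast, Int.natAbs_natCast]
    exact exists_cycleG_walk_add_natCast x m
  · obtain ⟨w, hw⟩ := exists_cycleG_walk_add_natCast (x + ((-m : ℤ) : ZMod n)) m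
    exact ⟨w.reverse.copy (by simp) rfl, by simpa using hw⟩

theorem cycleG_dist_le_iff {x y : ZMod n} {r : ℕ} :
    (cycleG n).dist x y ≤ r ↔ ∃ i : ℤ, i.natAbs ≤ r ∧ y = x + i := by
  constructor
  · intro h
    have hxy : (cycleG n).Reachable x y := by
      obtain ⟨i, hi⟩ := ZMod.intCast_surjective (y - x)
      obtain ⟨w, -⟩ := exists_cycleG_walk_add_intCast x i
      exact ⟨w.copy rfl (by rw [hi, add_sub_cancel])⟩
    obtain ⟨w, hw⟩ := hxy.exists_walk_length_eq_dist
    obtain ⟨i, hi, rfl⟩ := exists_int_of_cycleG_walk w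
    exact ⟨i, by lia, rfl⟩
  · rintro ⟨i, hi, rfl⟩
    obtain ⟨w, hw⟩ := exists_cycleG_walk_add_intCast x i
    exact (SimpleGraph.dist_le w).trans (hw.trans_le hi)

theorem mem_Dr_cycleG_add_iff {r : ℕ} {D : Set (ZMod n)} {x y : ZMod n} :
    y ∈ Dr (cycleG n) r D (x + r) ↔ y ∈ D ∧ ∃ t ≤ 2 * r, y = x + (t : ℕ) := by
  refine and_congr_right fun _ => cycleG_dist_le_iff.trans ⟨?_, ?_⟩
  · rintro ⟨i, hi, rfl⟩
    obtain ⟨t, ht⟩ := Int.eq_ofNat_of_zero_le (show 0 ≤ r + i by lia)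
    have htc := congrArg (Int.cast : ℤ → ZMod n) ht
    push_cast at htc
    exact ⟨t, by lia, by rw [add_assoc, htc]⟩
  · rintro ⟨t, ht, rfl⟩
    exact ⟨t - r, by lia, by push_cast; ring⟩

end Cycle

section Characterization

variable {n r : ℕ} {D : Set (ZMod n)}

theorem IsIdCode.exists_window_mem [Nontrivial (ZMod n)] (hD : IsIdCode (cycleG n) r D)
    (z : ZMod n) : ∃ t ≤ 2 * r, z + (t : ℕ) ∈ D := by
  obtain ⟨y, hy⟩ := hD.1 (z + r)
  obtain ⟨hyD, t, ht, rfl⟩ := mem_Dr_cycleG_add_iff.1 hy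
  exact ⟨t, ht, hyD⟩

theorem IsIdCode.add_mem_of_notMem [Nontrivial (ZMod n)] (hD : IsIdCode (cycleG n) r D)
    {z : ZMod n} (hz : z ∉ D) : z + (2 * r + 1 : ℕ) ∈ D := by
  by_contra hz'
  refine hD.2 (z + r) (z + 1 + r) (by simp) (Set.ext fun y => ?_)
  rw [mem_Dr_cycleG_add_iff, mem_Dr_cycleG_add_iff]
  refine and_congr_right fun hy => ⟨?_, ?_⟩
  · rintro ⟨_ | t, ht, rfl⟩
    · simp [hz] at hy
    · exact ⟨t, by lia, by push_cast; ring⟩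
  · rintro ⟨t, ht, rfl⟩
    have hshift : z + 1 + (t : ZMod n) = z + (t + 1 : ℕ) := by push_cast; ring
    have htr : t ≠ 2 * r := by
      rintro rfl
      exact hz' (hshift ▸ hy)
    exact ⟨t + 1, by lia, hshift⟩

theorem Dr_cycleG_ne_of_overlap (hn : 4 * r + 1 < n)
    (hcov : ∀ z ∉ D, z + (2 * r + 1 : ℕ) ∈ D) (z : ZMod n) {d : ℕ} (hd : d ≠ 0)
    (hdr : d ≤ 2 * r) : Dr (cycleG n) r D (z + r) ≠ Dr (cycleG n) r D (z + d + r) := by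
  have : Fact (1 < n) := ⟨by lia⟩
  have hinj := CharP.natCast_injOn_Iio (ZMod n) n
  intro h
  by_cases hz : z ∈ D
  · have hmem : z ∈ Dr (cycleG n) r D (z + r) := mem_Dr_cycleG_add_iff.2 ⟨hz, 0, by simp⟩
    rw [h, mem_Dr_cycleG_add_iff] at hmem
    obtain ⟨-, t, ht, hzt⟩ := hmem
    have hdt : ((d + t : ℕ) : ZMod n) = (0 : ℕ) := by
      push_cast
      linear_combination -hzt
    have := hinj (show d + t < n by lia) (show 0 < n by lia) hdt
    lia
  · have hmem : z + (2 * r + 1 : ℕ) ∈ Dr (cycleG n) r D (z + d + r) :=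
      mem_Dr_cycleG_add_iff.2 ⟨hcov z hz, 2 * r + 1 - d, by lia, by
        rw [add_assoc, ← Nat.cast_add, Nat.add_sub_cancel' (by lia)]⟩
    rw [← h, mem_Dr_cycleG_add_iff] at hmem
    obtain ⟨-, t, ht, hzt⟩ := hmem
    have := hinj (show 2 * r + 1 < n by lia) (show t < n by lia) (add_left_cancel hzt)
    lia

theorem isIdCode_cycleG_of_window_of_add_mem (hn : 4 * r + 1 < n)
    (hwin : ∀ z : ZMod n, ∃ t ≤ 2 * r, z + (t : ℕ) ∈ D)
    (hcov : ∀ z ∉ D, z + (2 * r + 1 : ℕ) ∈ D) : IsIdCode (cycleG n) r D := by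
  have : Fact (1 < n) := ⟨by lia⟩
  have hne (x : ZMod n) : (Dr (cycleG n) r D (x + r)).Nonempty := by
    obtain ⟨t, ht, hmem⟩ := hwin x
    exact ⟨_, mem_Dr_cycleG_add_iff.2 ⟨hmem, t, ht, rfl⟩⟩
  have hcenter := (Equiv.addRight (r : ZMod n)).surjective
  refine ⟨hcenter.forall.2 hne, hcenter.forall₂.2 fun x y hxy h => ?_⟩
  simp only [Equiv.coe_addRight] at hxy h
  -- Both balls contain some `x + t = y + t'`, so their centres differ by `|t - t'| ≤ 2r`.
  obtain ⟨z, hzx⟩ := hne x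
  have hzy := h ▸ hzx
  obtain ⟨-, t, ht, rfl⟩ := mem_Dr_cycleG_add_iff.1 hzx
  obtain ⟨-, t', ht', hxt⟩ := mem_Dr_cycleG_add_iff.1 hzy
  rcases le_total t t' with hle | hle <;> obtain ⟨d, rfl⟩ := Nat.exists_eq_add_of_le hle
  · obtain rfl : x = y + d := by push_cast at hxt; linear_combination hxt
    exact Dr_cycleG_ne_of_overlap hn hcov y (by rintro rfl; simp at hxy) (by lia) h.symm
  · obtain rfl : y = x + d := by push_cast at hxt; linear_combination -hxt
    exact Dr_cycleG_ne_of_overlap hn hcov x (by rintro rfl; simp at hxy) (by lia) h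

end Characterization

section LowerBound

section AddGroup

variable {G : Type*} [AddCommGroup G] {s : G} {D : Set G}

theorem ncard_inter_vadd_set_add_card [Finite G] (hcov : ∀ z ∉ D, z + s ∈ D) :
    (D ∩ (s +ᵥ D)).ncard + Nat.card G = 2 * D.ncard := by
  have hunion : D ∪ (s +ᵥ D) = Set.univ := by
    refine Set.eq_univ_of_forall fun z => or_iff_not_imp_right.2 fun hz => ?_
    rw [Set.mem_vadd_set_iff_neg_vadd_mem, vadd_eq_add] at hz
    simpa using hcov _ hz
  rw [← Set.ncard_univ, ← hunion, add_comm, Set.ncard_union_add_ncard_inter, Set.ncard_vadd_set,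
    two_mul]

theorem add_odd_nsmul_notMem {z₀ : G} (hcov : ∀ z ∉ D, z + s ∈ D)
    (hinter : D ∩ (s +ᵥ D) = {z₀}) {i : ℕ} (hi : 2 * i + 1 < addOrderOf s) :
    z₀ + (2 * i + 1) • s ∉ D := by
  have hstep {j : ℕ} (hj : j + 1 < addOrderOf s) (hmem : z₀ + j • s ∈ D) :
      z₀ + (j + 1) • s ∉ D := by
    intro hmem'
    have heq : z₀ + (j + 1) • s ∈ ({z₀} : Set G) := by
      rw [← hinter, Set.mem_inter_iff, Set.mem_vadd_set_iff_neg_vadd_mem, vadd_eq_add]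
      refine ⟨hmem', ?_⟩
      convert hmem using 1
      rw [succ_nsmul]
      abel
    rw [Set.mem_singleton_iff, add_eq_left] at heq
    exact nsmul_ne_zero_of_lt_addOrderOf j.succ_ne_zero hj heq
  induction i with
  | zero =>
    have hz₀ : z₀ ∈ D := (hinter.ge rfl).1
    exact hstep hi (by simpa using hz₀)
  | succ i ih =>
    refine hstep hi ?_
    have := hcov _ (ih (by lia))
    rwa [add_assoc, ← succ_nsmul] at this

end AddGroup

theorem addOrderOf_eq_of_isUnit {n : ℕ} {a : ZMod n} (ha : IsUnit a) : addOrderOf a = n := by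
  have := addOrderOf_injective (AddMonoidHom.mulLeft a) ha.mul_right_injective 1
  rwa [AddMonoidHom.coe_mulLeft, mul_one, ZMod.addOrderOf_one] at this

variable {c k m : ℕ} {s : ZMod (2 * k + 1)} {D : Set (ZMod (2 * k + 1))}

theorem exists_forall_add_odd_nsmul_notMem (hs : IsUnit s) (hcov : ∀ z ∉ D, z + s ∈ D)
    (hcard : D.ncard ≤ k + 1) : ∃ z₀, ∀ i < k, z₀ + (2 * i + 1) • s ∉ D := by
  have hcount := ncard_inter_vadd_set_add_card hcov
  rw [Nat.card_zmod] at hcount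
  obtain ⟨z₀, hz₀⟩ := Set.ncard_eq_one.1 (show (D ∩ (s +ᵥ D)).ncard = 1 by lia)
  refine ⟨z₀, fun i hi => add_odd_nsmul_notMem hcov hz₀ ?_⟩
  rw [addOrderOf_eq_of_isUnit hs]
  lia

theorem exists_window_disjoint (hc : 2 * c * s = 1 ∨ 2 * c * s = -1) (hlt : c * m < k)
    (hcov : ∀ z ∉ D, z + s ∈ D) (hcard : D.ncard ≤ k + 1) :
    ∃ z : ZMod (2 * k + 1), ∀ t ≤ m, z + (t : ℕ) ∉ D := by
  have hs : IsUnit s := by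
    refine isUnit_of_mul_isUnit_right (x := (2 * c : ZMod (2 * k + 1))) ?_
    rcases hc with hc | hc <;> rw [hc]
    exacts [isUnit_one, isUnit_one.neg]
  obtain ⟨z₀, hz₀⟩ := exists_forall_add_odd_nsmul_notMem hs hcov hcard
  have hmiss {j : ℕ} (hj : j ≤ m) : z₀ + (s + j * (2 * c * s)) ∉ D := by
    have := hz₀ (c * j) ((Nat.mul_le_mul_left c hj).trans_lt hlt)
    rw [nsmul_eq_mul] at this
    convert this using 2
    push_cast
    ring
  rcases hc with hc | hc <;> rw [hc] at hmiss
  · refine ⟨z₀ + s, fun t ht => ?_⟩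
    convert hmiss ht using 2
    ring
  · refine ⟨z₀ + s - m, fun t ht => ?_⟩
    convert hmiss (Nat.sub_le m t) using 2
    rw [Nat.cast_sub ht]
    ring

theorem IsIdCode.add_two_le_ncard {r : ℕ} (hD : IsIdCode (cycleG (2 * k + 1)) r D)
    (hc : 2 * c * ((2 * r + 1 : ℕ) : ZMod (2 * k + 1)) = 1 ∨
      2 * c * ((2 * r + 1 : ℕ) : ZMod (2 * k + 1)) = -1)
    (hlt : c * (2 * r) < k) : k + 2 ≤ D.ncard := by
  have : Fact (1 < 2 * k + 1) := ⟨by lia⟩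
  by_contra! hcard
  obtain ⟨z, hz⟩ := exists_window_disjoint hc hlt (fun _ => hD.add_mem_of_notMem) (by lia)
  obtain ⟨t, ht, hmem⟩ := hD.exists_window_mem z
  exact hz t ht hmem

end LowerBound

section Construction

theorem count_add_add_count_of_antiperiodic {s : ℕ} {p : ℕ → Prop} [DecidablePred p]
    (hp : ∀ x, p (x + s) ↔ ¬p x) (m : ℕ) :
    Nat.count p (m + s) + Nat.count p m = m + Nat.count p s := by
  induction m with
  | zero => simp
  | succ m ih =>
    rw [add_right_comm, Nat.count_succ, Nat.count_succ]
    by_cases hm : p m <;> simp only [hp, hm, not_true, not_false_iff, if_true, if_false] <;> lia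

theorem count_two_mul_mul_of_antiperiodic {s : ℕ} {p : ℕ → Prop} [DecidablePred p]
    (hp : ∀ x, p (x + s) ↔ ¬p x) (c : ℕ) : Nat.count p (2 * (s * c)) = s * c := by
  induction c with
  | zero => simp
  | succ c ih =>
    have h₁ := count_add_add_count_of_antiperiodic hp (2 * (s * c))
    have h₂ := count_add_add_count_of_antiperiodic hp (2 * (s * c) + s)
    rw [show 2 * (s * (c + 1)) = 2 * (s * c) + s + s by ring, mul_add_one]
    lia

theorem ncard_setOf_val {n : ℕ} [NeZero n] (p : ℕ → Prop) [DecidablePred p] :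
    {z : ZMod n | p z.val}.ncard = Nat.count p n := by
  rw [Nat.count_eq_card_filter_range, ← Set.ncard_coe_finset,
    ← Set.ncard_image_of_injective _ (ZMod.val_injective n)]
  congr 1
  ext x
  simp only [Set.mem_image, Set.mem_ofPred_eq, Finset.coe_filter, Finset.mem_range]
  constructor
  · rintro ⟨z, hz, rfl⟩
    exact ⟨z.val_lt, hz⟩
  · rintro ⟨hx, hpx⟩
    exact ⟨x, by rwa [ZMod.val_cast_of_lt hx], ZMod.val_cast_of_lt hx⟩

/-- The pattern underlying the optimal code: of the blocks of length `s`, those of even index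
without their second element, and the second element of those of odd index. -/
def CodePattern (s x : ℕ) : Prop := Even (x / s) ↔ x % s ≠ 1

instance (s : ℕ) : DecidablePred (CodePattern s) := fun _ => inferInstanceAs (Decidable (_ ↔ _))

/-- The optimal code in the cycle of length `n`, where `s = 2r + 1` is the size of a ball: the
vertices in `CodePattern s`, together with the vertex `1`. -/
def patternCode (s n : ℕ) : Set (ZMod n) := insert 1 {z | CodePattern s z.val}

variable {s n : ℕ}

theorem codePattern_add_iff (hs : 0 < s) (x : ℕ) : CodePattern s (x + s) ↔ ¬CodePattern s x := by
  simp only [CodePattern, Nat.add_div_right x hs, Nat.add_mod_right, Nat.even_add_one]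
  tauto

theorem codePattern_mul_add_iff {b j : ℕ} (hj : j < s) :
    CodePattern s (s * b + j) ↔ (Even b ↔ j ≠ 1) := by
  rw [CodePattern, Nat.mul_add_div (by lia), Nat.mul_add_mod, Nat.div_eq_of_lt hj,
    Nat.mod_eq_of_lt hj, add_zero]

theorem exists_codePattern_add (hs : 3 ≤ s) (x : ℕ) : ∃ t < s, CodePattern s (x + t) := by
  obtain ⟨b, m, hm, rfl⟩ : ∃ b m, m < s ∧ x = s * b + m :=
    ⟨x / s, x % s, Nat.mod_lt x (by lia), (Nat.div_add_mod x s).symm⟩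
  have hin {t : ℕ} (ht : m + t < s) : CodePattern s (s * b + m + t) ↔ (Even b ↔ m + t ≠ 1) := by
    rw [add_assoc, codePattern_mul_add_iff ht]
  by_cases hb : Even b
  · by_cases hm1 : m = 1
    · exact ⟨1, by lia, (hin (by lia)).2 (by simp [hb, hm1])⟩
    · exact ⟨0, by lia, (hin (by lia)).2 (by simp [hb, hm1])⟩
  · by_cases hm1 : m ≤ 1
    · exact ⟨1 - m, by lia, (hin (by lia)).2 (by simp [hb, hm1])⟩
    · refine ⟨s - m, by lia, ?_⟩
      rw [show s * b + m + (s - m) = s * (b + 1) + 0 by rw [mul_add_one]; lia,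
        codePattern_mul_add_iff (by lia)]
      simp [Nat.even_add_one, hb]

theorem natCast_mem_patternCode {x : ℕ} (hx : x < n) (h : CodePattern s x ∨ x = 1) :
    (x : ZMod n) ∈ patternCode s n := by
  rcases h with h | rfl
  · exact Or.inr (by rwa [Set.mem_ofPred_eq, ZMod.val_cast_of_lt hx])
  · exact Or.inl Nat.cast_one

theorem natCast_mem_patternCode_of_lt {x : ℕ} (hxs : x < s) (hxn : x < n) :
    (x : ZMod n) ∈ patternCode s n := by
  have hx := codePattern_mul_add_iff (b := 0) hxs
  refine natCast_mem_patternCode hxn ?_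
  simp only [mul_zero, zero_add, Even.zero, true_iff] at hx
  tauto

theorem exists_add_mem_patternCode [NeZero n] (hs : 3 ≤ s) (z : ZMod n) :
    ∃ t < s, z + (t : ℕ) ∈ patternCode s n := by
  obtain ⟨t, hts, ht⟩ := exists_codePattern_add hs z.val
  rcases lt_or_ge (z.val + t) n with hlt | hge
  · refine ⟨t, hts, ?_⟩
    simpa using natCast_mem_patternCode hlt (Or.inl ht)
  -- The window wraps around, so it contains the vertex `0`.
  · refine ⟨n - z.val, by lia, ?_⟩
    have h0 : z + (n - z.val : ℕ) = (0 : ℕ) := by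
      rw [Nat.cast_sub z.val_lt.le]
      simp
    rw [h0]
    exact natCast_mem_patternCode_of_lt (by lia) (NeZero.pos n)

theorem add_mem_patternCode_of_notMem [NeZero n] (hs : 0 < s) (hsn : s ≤ n) {z : ZMod n}
    (hz : z ∉ patternCode s n) : z + (s : ℕ) ∈ patternCode s n := by
  rcases lt_or_ge (z.val + s) n with hlt | hge
  · have hpat : CodePattern s (z.val + s) := (codePattern_add_iff hs _).2 fun h => hz (Or.inr h)
    simpa using natCast_mem_patternCode hlt (Or.inl hpat)
  · have hval := z.val_lt
    have hwrap : z + (s : ℕ) = (z.val + s - n : ℕ) := by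
      rw [Nat.cast_sub hge]
      simp
    rw [hwrap]
    exact natCast_mem_patternCode_of_lt (by lia) (by lia)

theorem ncard_patternCode_le_count_add_one [NeZero n] :
    (patternCode s n).ncard ≤ Nat.count (CodePattern s) n + 1 := by
  rw [← ncard_setOf_val]
  exact Set.ncard_insert_le _ _

theorem isIdCode_patternCode {r : ℕ} (hr : 1 ≤ r) (hn : 4 * r + 1 < n) :
    IsIdCode (cycleG n) r (patternCode (2 * r + 1) n) := by
  have : NeZero n := ⟨by lia⟩
  refine isIdCode_cycleG_of_window_of_add_mem hn (fun z : ZMod n => ?_)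
    fun z hz => add_mem_patternCode_of_notMem (by lia) (by lia) hz
  obtain ⟨t, ht, hmem⟩ := exists_add_mem_patternCode (s := 2 * r + 1) (n := n) (by lia) z
  exact ⟨t, by lia, hmem⟩

theorem ncard_patternCode_le_add_two {k c : ℕ} (hs : 0 < s) (hk : k = s * c ∨ k + 1 = s * c) :
    (patternCode s (2 * k + 1)).ncard ≤ k + 2 := by
  refine ncard_patternCode_le_count_add_one.trans (Nat.succ_le_succ ?_)
  have hcount := count_two_mul_mul_of_antiperiodic (codePattern_add_iff hs) c
  rcases hk with rfl | hk
  · rw [Nat.count_succ, hcount]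
    split_ifs <;> lia
  · calc Nat.count (CodePattern s) (2 * k + 1)
        ≤ Nat.count (CodePattern s) (2 * (s * c)) := Nat.count_monotone _ (by lia)
      _ = k + 1 := by rw [hcount, hk]

end Construction

theorem two_mul_mul_eq_one_or_neg_one {s c k : ℕ} (hk : k = s * c ∨ k + 1 = s * c) :
    (2 * c * s : ZMod (2 * k + 1)) = 1 ∨ (2 * c * s : ZMod (2 * k + 1)) = -1 := by
  have hn : (2 * k + 1 : ZMod (2 * k + 1)) = 0 := by
    exact_mod_cast ZMod.natCast_self (2 * k + 1)
  rcases hk with hk | hk <;> have hkc := congrArg (Nat.cast : ℕ → ZMod (2 * k + 1)) hk <;>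
    push_cast at hkc
  · exact Or.inr (by linear_combination hn - 2 * hkc)
  · exact Or.inl (by linear_combination hn - 2 * hkc)

theorem stmt5 (r p q k : ℕ) (hr : 1 ≤ r) (hp : 1 ≤ p)
    (hk : k = (2*r+1)*p + q) (hq : q = 0 ∨ q = 2*r)
    (hg : Nat.gcd (2*r+1) (2*k+1) = 1) :
    IsLeast {m | ∃ D : Set (ZMod (2*k+1)),
        IsIdCode (cycleG (2*k+1)) r D ∧ D.ncard = m} (k+2) := by
  have hrk : 2 * r + 1 ≤ k := by nlinarith
  obtain ⟨c, hc, hlt⟩ : ∃ c, (k = (2 * r + 1) * c ∨ k + 1 = (2 * r + 1) * c) ∧ c * (2 * r) < k := by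
    rcases hq with rfl | rfl
    · exact ⟨p, Or.inl hk, by lia⟩
    · exact ⟨p + 1, Or.inr (by lia), by lia⟩
  have hlower {D : Set (ZMod (2 * k + 1))} (hD : IsIdCode (cycleG (2 * k + 1)) r D) :
      k + 2 ≤ D.ncard := hD.add_two_le_ncard (two_mul_mul_eq_one_or_neg_one hc) hlt
  have hcode : IsIdCode (cycleG (2 * k + 1)) r (patternCode (2 * r + 1) (2 * k + 1)) :=
    isIdCode_patternCode hr (by lia)
  refine ⟨⟨_, hcode, (ncard_patternCode_le_add_two (by lia) hc).antisymm (hlower hcode)⟩, ?_⟩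
  rintro _ ⟨D, hD, rfl⟩
  exact hlower hD
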